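/- arXiv:quant-ph/0507208 — 6 statements merged into one kernel-verified Lean document; each statement's English description precedes it below -/
import Mathlib

section
/- If β = (β1, β2, β3, β4, β5, β6) ∈ X, then β5² − 4β1β2β3 ≤ 0. -/
/-- if β ∈ X then β5² − 4β1β2β3 ≤ 0. -/
theorem stmt7 (β1 β2 β3 β4 β5 β6 : ℝ)
    (hi1 : 0 ≤ β1 ∧ β1 ≤ 1/4) (hi2 : 0 ≤ β2 ∧ β2 ≤ 1/4)
    (hi3 : 0 ≤ β3 ∧ β3 ≤ 1/4) (hi4 : 0 ≤ β4 ∧ β4 ≤ 1/4)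
    (hii : β1 * β2 + β1 * β3 + β2 * β3 + (β1 + β2 + β3) * β4 + β4^2
             ≤ (1/4) * β4 + (1/2) * β5)
    (hiii : ((β5 + β4)^2 - 4 * (β1 + β4) * (β2 + β4) * (β3 + β4))
              * (β5^2 - 4 * β1 * β2 * β3) + 4 * β6^2 = 0) :
    β5^2 - 4 * β1 * β2 * β3 ≤ 0 := by
  -- Write (iii) as `A * B + 4 * β6 ^ 2 = 0`. Then `A - B` equals `4 * β4` times the slack in (ii),
  -- so `B ≤ A`; if `B` were positive, so would be `A * B`, contradicting (iii).
  by_contra! hB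
  have hAB := mul_nonneg hi4.1 (sub_nonneg.2 hii)
  have hA : 0 < (β5 + β4)^2 - 4 * (β1 + β4) * (β2 + β4) * (β3 + β4) := by linarith
  linarith [mul_pos hA hB, sq_nonneg β6]
end

section
/- If β = (β1, β2, β3, β4, β5, β6) ∈ X, then Δ_β := (β5 + β4)² − 4(β1 + β4)(β2 + β4)(β3 + β4) ≥ 0. -/
/-- if β ∈ X then Δ_β = (β5+β4)² − 4(β1+β4)(β2+β4)(β3+β4) ≥ 0. -/
theorem stmt8 (β1 β2 β3 β4 β5 β6 : ℝ)
    (hi1 : 0 ≤ β1 ∧ β1 ≤ 1/4) (hi2 : 0 ≤ β2 ∧ β2 ≤ 1/4)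
    (hi3 : 0 ≤ β3 ∧ β3 ≤ 1/4) (hi4 : 0 ≤ β4 ∧ β4 ≤ 1/4)
    (hii : β1 * β2 + β1 * β3 + β2 * β3 + (β1 + β2 + β3) * β4 + β4^2
             ≤ (1/4) * β4 + (1/2) * β5)
    (hiii : ((β5 + β4)^2 - 4 * (β1 + β4) * (β2 + β4) * (β3 + β4))
              * (β5^2 - 4 * β1 * β2 * β3) + 4 * β6^2 = 0) :
    (β5 + β4)^2 - 4 * (β1 + β4) * (β2 + β4) * (β3 + β4) ≥ 0 := by
  -- With S the left side of hypothesis (ii) and D = β5² − 4β1β2β3,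
  -- Δ = D + 4 β4 (β4/4 + β5/2 − S); the second summand is nonnegative by (ii).
  -- If Δ < 0, then D < 0 as well, so Δ D > 0, contradicting (iii).
  have hslack := mul_nonneg hi4.1 (sub_nonneg.mpr hii)
  by_contra! hΔ
  have hD : β5^2 - 4 * β1 * β2 * β3 < 0 := by linarith
  linarith [mul_pos_of_neg_of_neg hΔ hD, sq_nonneg β6]
end

section
/- If β = (β1, β2, β3, β4, β5, β6) ∈ X and β1β2β3 = 0, then β5 = 0 and β6 = 0. -/
/-!
Write `s` for the left-hand side of `hii`. When `β1 β2 β3 = 0`,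
`(β1 + β4) (β2 + β4) (β3 + β4) = β4 s`, so multiplying `hii` by `4 β4 ≥ 0` bounds
`4 (β1 + β4) (β2 + β4) (β3 + β4)` by `β4² + 2 β4 β5 = (β5 + β4)² - β5²`. Hence the first factor in
`hiii` is at least `β5²`, and `hiii` yields `β5⁴ + 4 β6² ≤ 0`.
-/


/-- if β ∈ X and β1β2β3 = 0, then β5 = 0 and β6 = 0. -/
theorem stmt13 (β1 β2 β3 β4 β5 β6 : ℝ)
    (hi1 : 0 ≤ β1 ∧ β1 ≤ 1/4) (hi2 : 0 ≤ β2 ∧ β2 ≤ 1/4)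
    (hi3 : 0 ≤ β3 ∧ β3 ≤ 1/4) (hi4 : 0 ≤ β4 ∧ β4 ≤ 1/4)
    (hii : β1 * β2 + β1 * β3 + β2 * β3 + (β1 + β2 + β3) * β4 + β4^2
             ≤ (1/4) * β4 + (1/2) * β5)
    (hiii : ((β5 + β4)^2 - 4 * (β1 + β4) * (β2 + β4) * (β3 + β4))
              * (β5^2 - 4 * β1 * β2 * β3) + 4 * β6^2 = 0)
    (hz : β1 * β2 * β3 = 0) :
    β5 = 0 ∧ β6 = 0 := by
  have hfac : β5^2 ≤ (β5 + β4)^2 - 4 * (β1 + β4) * (β2 + β4) * (β3 + β4) := by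
    have h := mul_le_mul_of_nonneg_left hii hi4.1
    linarith
  have hprod := mul_le_mul_of_nonneg_right hfac (sq_nonneg β5)
  have hsum : (β5^2)^2 + 4 * β6^2 ≤ 0 := by
    have hlast : 4 * β1 * β2 * β3 = 0 := by linarith
    rw [hlast, sub_zero] at hiii
    linarith
  have h5 : (β5^2)^2 = 0 := by linarith [sq_nonneg (β5^2), sq_nonneg β6]
  have h6 : β6^2 = 0 := by linarith [sq_nonneg (β5^2), sq_nonneg β6]
  exact ⟨by simpa using h5, by simpa using h6⟩
end

section
/- If β = (β1, β2, β3, β4, β5, β6) ∈ X and β4 = 0, then β5 = 2√(β1β2β3) and β6 = 0; consequently β1β2 + β1β3 + β2β3 ≤ √(β1β2β3). -/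
/-- if β ∈ X and β4 = 0, then β5 = 2√(β1β2β3) and β6 = 0; consequently β1β2 + β1β3 + β2β3 ≤ √(β1β2β3). -/
theorem stmt14 (β1 β2 β3 β4 β5 β6 : ℝ)
    (hi1 : 0 ≤ β1 ∧ β1 ≤ 1/4) (hi2 : 0 ≤ β2 ∧ β2 ≤ 1/4)
    (hi3 : 0 ≤ β3 ∧ β3 ≤ 1/4) (hi4 : 0 ≤ β4 ∧ β4 ≤ 1/4)
    (hii : β1 * β2 + β1 * β3 + β2 * β3 + (β1 + β2 + β3) * β4 + β4^2
             ≤ (1/4) * β4 + (1/2) * β5)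
    (hiii : ((β5 + β4)^2 - 4 * (β1 + β4) * (β2 + β4) * (β3 + β4))
              * (β5^2 - 4 * β1 * β2 * β3) + 4 * β6^2 = 0)
    (hz : β4 = 0) :
    β5 = 2 * Real.sqrt (β1 * β2 * β3) ∧ β6 = 0 ∧ β1 * β2 + β1 * β3 + β2 * β3 ≤ Real.sqrt (β1 * β2 * β3) := by
  obtain ⟨h1, -⟩ := hi1
  obtain ⟨h2, -⟩ := hi2
  obtain ⟨h3, -⟩ := hi3
  subst hz
  -- At `β4 = 0` the two factors of (iii) coincide, so (iii) is a vanishing sum of two squares.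
  have hsq : (β5 ^ 2 - 4 * (β1 * β2 * β3)) ^ 2 + 4 * β6 ^ 2 = 0 := by linear_combination hiii
  have h6 : β6 = 0 := by
    have : β6 ^ 2 = 0 := by nlinarith [sq_nonneg (β5 ^ 2 - 4 * (β1 * β2 * β3)), sq_nonneg β6]
    exact pow_eq_zero_iff two_ne_zero |>.mp this
  have h5 : β5 ^ 2 - 4 * (β1 * β2 * β3) = 0 := by
    rw [h6] at hsq
    exact pow_eq_zero_iff two_ne_zero |>.mp (by linarith)
  -- Condition (ii) selects the nonnegative root.
  have h5_nonneg : 0 ≤ β5 := by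
    linarith [mul_nonneg h1 h2, mul_nonneg h1 h3, mul_nonneg h2 h3]
  have hroot : Real.sqrt (β1 * β2 * β3) = β5 / 2 := by
    rw [show β1 * β2 * β3 = (β5 / 2) ^ 2 by linarith]
    exact Real.sqrt_sq (by linarith)
  refine ⟨?_, h6, ?_⟩ <;> rw [hroot] <;> linarith
end

section
/- If β = (β1, β2, β3, β4, β5, β6) ∈ X and β4 = 1/4, then β1 = β2 = β3 = β5 = β6 = 0; that is, X ∩ {β4 = 1/4} consists of the single point (0, 0, 0, 1/4, 0, 0). -/
/-!
Write `e₁, e₂, e₃` for the elementary symmetric functions of `β1, β2, β3` and put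
`s = 2 e₂ + e₁ / 2`. At `β4 = 1/4` the inequality reads `s ≤ β5`. Both factors of the
quartic are then at least `s² - 4 e₃`: the first one equals
`(β5² - 4 e₃) + (β5 - s) / 2`. Since `e₁ e₂ ≥ 3 e₃`, one has `s² - 4 e₃ ≥ e₁² / 4`, so
the product of the factors is nonnegative, and it is positive unless `e₁ = 0`.
As the product equals `-4 β6²`, this forces `β1 = β2 = β3 = 0`. What remains is
`(β5² + β5 / 2) β5² + 4 β6² = 0` with `β5 ≥ 0`, whence `β5 = β6 = 0`.
-/


/-- if β ∈ X and β4 = 1/4, then β1 = β2 = β3 = β5 = β6 = 0. -/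
theorem stmt15 (β1 β2 β3 β4 β5 β6 : ℝ)
    (hi1 : 0 ≤ β1 ∧ β1 ≤ 1/4) (hi2 : 0 ≤ β2 ∧ β2 ≤ 1/4)
    (hi3 : 0 ≤ β3 ∧ β3 ≤ 1/4) (hi4 : 0 ≤ β4 ∧ β4 ≤ 1/4)
    (hii : β1 * β2 + β1 * β3 + β2 * β3 + (β1 + β2 + β3) * β4 + β4^2
             ≤ (1/4) * β4 + (1/2) * β5)
    (hiii : ((β5 + β4)^2 - 4 * (β1 + β4) * (β2 + β4) * (β3 + β4))
              * (β5^2 - 4 * β1 * β2 * β3) + 4 * β6^2 = 0)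
    (hz : β4 = 1/4) :
    β1 = 0 ∧ β2 = 0 ∧ β3 = 0 ∧ β5 = 0 ∧ β6 = 0 := by
  obtain ⟨h1, -⟩ := hi1
  obtain ⟨h2, -⟩ := hi2
  obtain ⟨h3, -⟩ := hi3
  subst hz
  have h12 := mul_nonneg h1 h2
  have h13 := mul_nonneg h1 h3
  have h23 := mul_nonneg h2 h3
  have hs : 2 * (β1 * β2 + β1 * β3 + β2 * β3) + (β1 + β2 + β3) / 2 ≤ β5 := by linarith
  have h5 : 0 ≤ β5 := by linarith
  have hsq : (2 * (β1 * β2 + β1 * β3 + β2 * β3) + (β1 + β2 + β3) / 2) ^ 2 ≤ β5 ^ 2 :=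
    pow_le_pow_left₀ (by positivity) hs 2
  have hB : (β1 + β2 + β3) ^ 2 / 4 ≤ β5 ^ 2 - 4 * β1 * β2 * β3 := by
    have := mul_nonneg h12 h1
    have := mul_nonneg h12 h2
    have := mul_nonneg h12 h3
    have := mul_nonneg h13 h1
    have := mul_nonneg h13 h3
    have := mul_nonneg h23 h2
    have := mul_nonneg h23 h3
    linarith [sq_nonneg (β1 * β2 + β1 * β3 + β2 * β3)]
  have hA : (β1 + β2 + β3) ^ 2 / 4
      ≤ (β5 + 1/4) ^ 2 - 4 * (β1 + 1/4) * (β2 + 1/4) * (β3 + 1/4) := by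
    linarith
  have he : β1 + β2 + β3 = 0 := by
    by_contra hne
    have hp : 0 < (β1 + β2 + β3) ^ 2 / 4 := by positivity
    have := mul_pos (hp.trans_le hA) (hp.trans_le hB)
    linarith [sq_nonneg β6]
  obtain rfl : β1 = 0 := by linarith
  obtain rfl : β2 = 0 := by linarith
  obtain rfl : β3 = 0 := by linarith
  have h53 : 0 ≤ β5 ^ 3 := by positivity
  have h54 : 0 ≤ β5 ^ 4 := by positivity
  have h6 : 0 ≤ β6 ^ 2 := sq_nonneg β6
  refine ⟨rfl, rfl, rfl, ?_, ?_⟩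
  · exact pow_eq_zero_iff (n := 3) (by norm_num) |>.mp (by linarith)
  · exact pow_eq_zero_iff (n := 2) (by norm_num) |>.mp (by linarith)
end

section
/- For every real c with 0 < c < 1/4, the slice X ∩ {β : β4 = c}, with the subspace topology from ℝ^6, is homeomorphic to the 4-sphere S^4 (the unit sphere in ℝ^5). -/
/-!
Fix `0 < c < 1/4`. On the slice `β₄ = c` write `β₁ = a²`, `β₂ = b²`, `β₃ = d²` with
`a, b, d ≥ 0`, `P = abd`, `v = P - β₅/2`, `t = β₆`, and
`T = c/4 - c² - c(a²+b²+d²) - (a²b²+a²d²+b²d²) + abd`. Then the quadratic inequality in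
`Xset` says `v ≤ T`, and the two factors in its last equation are `-4 v (2P - v)`
and `4 (c(T - v) - v(2P - v))`. Hence the slice is given by
`0 ≤ v ≤ 2P`, `v ≤ T`, `g ≥ 0`, `t² = 4 v g` with `g = (2P - v)(c(T - v) - v(2P - v))`; the upper
bounds `βᵢ ≤ 1/4` are automatic (`mem_slice_iff`).

The slice therefore fibres over `D = {a, b, d, T ≥ 0}`. Two facts determine its topology.

* `D` is a simplex: `(a, b, d) ↦ [a³ : b³ : d³ : T]` is a bijection from `D` onto the nonnegative
  rays of `ℝ⁴`. Uniqueness holds because `T / m³` strictly decreases along `m ↦ (ma, mb, md)`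
  wherever `a² + b² + d² < 3/4 - 3c` (`sliceT_scale_lt`), a region that contains `D`
  (`sum_lt_of_sliceT_nonneg`); existence is the intermediate value theorem (`exists_radial`).
* The fibres are circles, collapsed to points exactly over `∂D`: since `t² = 4 v g`, the vector
  `(v - g, t)` has norm `v + g`. On a fibre `g` strictly decreases in `v` (`sliceG_lt`), so the
  direction of this vector determines `(v, t)` (`fibre_unique`), and every direction occurs
  (`exists_fibre`). If `abdT = 0`, then `v = t = 0`.

Rescaling `(v - g, t)` to the length `M = min(a³, b³, d³, T)` gives a continuous map
`(a³ - T, b³ - T, d³ - T, M (v - g)/(v + g), M t/(v + g))` into `ℝ⁵ ∖ {0}` (`toFive`) that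
meets every open ray from the origin exactly once: the first three coordinates together
with `M` recover `(a³, b³, d³, T)` compatibly with scaling (`cone_unique`). Normalizing it is a continuous bijection
from a compact space onto the sphere, hence a homeomorphism.
-/

/-- The subset `X ⊂ ℝ^6` (coordinates `β 0,…,β 5` = `β1,…,β6`). -/
def Xset : Set (Fin 6 → ℝ) :=
  {β | (0 ≤ β 0 ∧ β 0 ≤ 1/4) ∧ (0 ≤ β 1 ∧ β 1 ≤ 1/4) ∧
       (0 ≤ β 2 ∧ β 2 ≤ 1/4) ∧ (0 ≤ β 3 ∧ β 3 ≤ 1/4) ∧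
       (β 0 * β 1 + β 0 * β 2 + β 1 * β 2 + (β 0 + β 1 + β 2) * β 3 + (β 3)^2
          ≤ (1/4) * β 3 + (1/2) * β 4) ∧
       ((β 4 + β 3)^2 - 4 * (β 0 + β 3) * (β 1 + β 3) * (β 2 + β 3))
          * ((β 4)^2 - 4 * β 0 * β 1 * β 2) + 4 * (β 5)^2 = 0}

/-! ### The base of the fibration -/

/-- The slack `T` in the quadratic inequality of `Xset`: with `β₁ = a²`, `β₂ = b²`, `β₃ = d²`,
`β₄ = c` and `β₅ = 2 (abd - v)`, that inequality reads `v ≤ T`. -/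
noncomputable def sliceT (c a b d : ℝ) : ℝ :=
  c/4 - c^2 - c*(a^2+b^2+d^2) - (a^2*b^2+a^2*d^2+b^2*d^2) + a*b*d

/-- The function `g` for which the last equation of `Xset` reads `β₆² = 4 v g`, where
`v = abd - β₅/2`. -/
noncomputable def sliceG (c a b d v : ℝ) : ℝ :=
  (2*(a*b*d) - v) * (c*(sliceT c a b d - v) - v*(2*(a*b*d) - v))

/-- The region `T ≥ 0` lies where `T` behaves well under scaling. With `S = a²+b²+d²` and
`s = √(3S)`, Maclaurin's inequalities give `s·abd ≤ a²b²+a²d²+b²d²` and `abd ≤ s³/27`. If the bound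
fails, then `c S ≥ 3(c/4 - c²)`; this contradicts `T ≥ 0` at once when `s ≥ 1`, while for `s < 1` it
gives both `c > 5/36` and `6c ≤ s(1 - s) ≤ 1/4`. -/
lemma sum_lt_of_sliceT_nonneg {c a b d : ℝ} (hc0 : 0 < c) (hc1 : c < 1/4)
    (ha : 0 ≤ a) (hb : 0 ≤ b) (hd : 0 ≤ d) (hT : 0 ≤ sliceT c a b d) :
    a^2 + b^2 + d^2 < 3/4 - 3*c := by
  by_contra! h
  set S := a^2+b^2+d^2 with hS
  set E := a^2*b^2+a^2*d^2+b^2*d^2 with hE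
  set P := a*b*d with hP
  have hT' : 0 ≤ c/4 - c^2 - c*S - E + P := hT
  have hS0 : 0 < S := by linarith
  have hP0 : 0 ≤ P := by positivity
  have hE0 : 0 ≤ E := by positivity
  obtain ⟨s, hs0, hs⟩ : ∃ s : ℝ, 0 < s ∧ s^2 = 3*S :=
    ⟨√(3*S), by positivity, Real.sq_sqrt (by positivity)⟩
  have hEP : s*P ≤ E := by
    apply le_of_sq_le_sq _ hE0
    rw [mul_pow, hs, hS, hP, hE]
    nlinarith [sq_nonneg (a^2*b^2-a^2*d^2), sq_nonneg (a^2*b^2-b^2*d^2),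
      sq_nonneg (a^2*d^2-b^2*d^2)]
  have hPs : P ≤ s^3/27 := by
    apply le_of_sq_le_sq _ (by positivity)
    have : (s^3/27)^2 = (3*S)^3/27^2 := by rw [← hs]; ring
    rw [this, hS, hP]
    nlinarith [mul_nonneg (sq_nonneg a) (sq_nonneg (b^2-d^2)),
      mul_nonneg (sq_nonneg b) (sq_nonneg (a^2-d^2)),
      mul_nonneg (sq_nonneg d) (sq_nonneg (a^2-b^2)),
      mul_nonneg (sq_nonneg a) (sq_nonneg (a^2-d^2)),
      mul_nonneg (sq_nonneg a) (sq_nonneg (a^2-b^2)),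
      mul_nonneg (sq_nonneg b) (sq_nonneg (b^2-d^2)),
      mul_nonneg (sq_nonneg b) (sq_nonneg (a^2-b^2)),
      mul_nonneg (sq_nonneg d) (sq_nonneg (a^2-d^2)),
      mul_nonneg (sq_nonneg d) (sq_nonneg (b^2-d^2))]
  have hk : 3*(c/4 - c^2) ≤ c*S := by nlinarith
  have hkpos : 0 < c/4 - c^2 := by nlinarith
  rcases le_or_gt 1 s with h1 | h1
  · nlinarith [mul_nonneg (sub_nonneg.2 h1) hP0]
  · have hc2 : 5/36 < c := by nlinarith
    have h2 : (2/9)*c*s^2 ≤ (1-s)*(s^3/27) := by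
      have := mul_le_mul_of_nonneg_left hPs (sub_nonneg.2 h1.le)
      rw [mul_assoc, hs]
      nlinarith
    have h3 : 0 ≤ s^2 * ((1-s)*s/27 - (2/9)*c) := by nlinarith
    have h4 : 0 ≤ (1-s)*s/27 - (2/9)*c := nonneg_of_mul_nonneg_right h3 (by positivity)
    nlinarith [sq_nonneg (s-1/2)]

/-- The upper bound `β₁ ≤ 1/4` is a consequence of `T ≥ 0`: for `a > 1/2` one has
`abd ≤ 2a²bd ≤ a²b² + a²d²`, so `T ≥ 0` would give `c a² ≤ c/4 - c²`. -/
lemma sq_le_of_sliceT_nonneg {c a b d : ℝ} (hc0 : 0 < c)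
    (ha : 0 ≤ a) (hb : 0 ≤ b) (hd : 0 ≤ d) (hT : 0 ≤ sliceT c a b d) : a^2 ≤ 1/4 := by
  by_contra! h
  have ha2 : 1/2 < a := by nlinarith
  unfold sliceT at hT
  have h1 : a*b*d ≤ a^2*(2*(b*d)) := by
    nlinarith [mul_nonneg (mul_nonneg ha (mul_nonneg hb hd)) (by linarith : 0 ≤ 2*a-1)]
  have h2 : a^2*(2*(b*d)) ≤ a^2*b^2+a^2*d^2 := by
    nlinarith [mul_nonneg (sq_nonneg a) (sq_nonneg (b-d))]
  nlinarith [sq_nonneg (b*d), mul_nonneg hc0.le (sq_nonneg b), mul_nonneg hc0.le (sq_nonneg d),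
    mul_pos hc0 hc0, mul_pos hc0 (sub_pos.2 h)]

lemma sliceT_swap (c a b d : ℝ) : sliceT c a b d = sliceT c b a d := by unfold sliceT; ring
lemma sliceT_rot (c a b d : ℝ) : sliceT c a b d = sliceT c d a b := by unfold sliceT; ring

/-- `m ↦ T(ma, mb, md) / m³` is strictly decreasing up to `m = 1`; this makes the coordinates
`[a³ : b³ : d³ : T]` injective. -/
lemma sliceT_scale_lt {c a b d m : ℝ} (hc0 : 0 < c) (hc1 : c < 1/4)
    (hS : a^2 + b^2 + d^2 < 3/4 - 3*c) (hm0 : 0 < m) (hm1 : m < 1) :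
    m^3 * sliceT c a b d < sliceT c (m*a) (m*b) (m*d) := by
  have hk : c*(a^2+b^2+d^2) < 3*(c/4 - c^2) := by nlinarith
  have hkpos : 0 < c/4 - c^2 := by nlinarith
  have hE : 0 ≤ a^2*b^2+a^2*d^2+b^2*d^2 := by positivity
  have key : sliceT c (m*a) (m*b) (m*d) - m^3 * sliceT c a b d =
      (1-m) * ((c/4-c^2)*(1+m+m^2) - c*(a^2+b^2+d^2)*m^2
        + (a^2*b^2+a^2*d^2+b^2*d^2)*m^3) := by
    unfold sliceT; ring
  have h1 : 3*(c/4-c^2)*m^2 ≤ (c/4-c^2)*(1+m+m^2) := by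
    have : 3*m^2 ≤ 1+m+m^2 := by nlinarith
    nlinarith
  have h2 : c*(a^2+b^2+d^2)*m^2 < 3*(c/4 - c^2)*m^2 :=
    mul_lt_mul_of_pos_right hk (by positivity)
  have h3 : 0 ≤ (a^2*b^2+a^2*d^2+b^2*d^2)*m^3 := by positivity
  have : 0 < (1-m) * ((c/4-c^2)*(1+m+m^2) - c*(a^2+b^2+d^2)*m^2
        + (a^2*b^2+a^2*d^2+b^2*d^2)*m^3) := mul_pos (by linarith) (by linarith)
  linarith

lemma sliceT_ray_unique {c a b d a' b' d' m : ℝ} (hc0 : 0 < c) (hc1 : c < 1/4)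
    (hS : a^2 + b^2 + d^2 < 3/4 - 3*c) (hS' : a'^2 + b'^2 + d'^2 < 3/4 - 3*c) (hm : 0 < m)
    (ha : a' = m*a) (hb : b' = m*b) (hd : d' = m*d)
    (hT : sliceT c a' b' d' = m^3 * sliceT c a b d) : m = 1 := by
  rcases lt_trichotomy m 1 with h | h | h
  · have := sliceT_scale_lt hc0 hc1 hS hm h
    rw [← ha, ← hb, ← hd, hT] at this
    exact absurd this (lt_irrefl _)
  · exact h
  · have := sliceT_scale_lt hc0 hc1 hS' (inv_pos.2 hm) (inv_lt_one_of_one_lt₀ h)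
    rw [hT, ha, hb, hd] at this
    simp only [inv_mul_cancel_left₀ hm.ne'] at this
    rw [← mul_assoc, ← mul_pow, inv_mul_cancel₀ hm.ne', one_pow, one_mul] at this
    exact absurd this (lt_irrefl _)

lemma exists_cube {k : ℝ} (hk : 0 ≤ k) : ∃ m : ℝ, 0 ≤ m ∧ m^3 = k :=
  ⟨k ^ ((3:ℕ)⁻¹ : ℝ), by positivity, Real.rpow_inv_natCast_pow hk (by norm_num)⟩

/-- Every nonnegative ray of `ℝ⁴` is the ray of some `(a³, b³, d³, T)`: along a ray of the octant,
`T - m³τ` is positive at the origin and nonpositive once `a²+b²+d²` reaches `3/4 - 3c`. -/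
lemma exists_radial {c α β γ τ : ℝ} (hc0 : 0 < c) (hc1 : c < 1/4)
    (hα : 0 ≤ α) (hβ : 0 ≤ β) (hγ : 0 ≤ γ) (hτ : 0 ≤ τ)
    (hne : α ≠ 0 ∨ β ≠ 0 ∨ γ ≠ 0 ∨ τ ≠ 0) :
    ∃ k a b d : ℝ, 0 < k ∧ 0 ≤ a ∧ 0 ≤ b ∧ 0 ≤ d ∧ a^3 = k*α ∧ b^3 = k*β ∧ d^3 = k*γ ∧
      sliceT c a b d = k*τ := by
  have hkpos : 0 < c/4 - c^2 := by nlinarith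
  obtain ⟨x, hx, rfl⟩ := exists_cube hα
  obtain ⟨y, hy, rfl⟩ := exists_cube hβ
  obtain ⟨z, hz, rfl⟩ := exists_cube hγ
  have hT0 : sliceT c 0 0 0 = c/4-c^2 := by unfold sliceT; ring
  by_cases h0 : x^2+y^2+z^2 = 0
  · have hx0 : x = 0 := by nlinarith [sq_nonneg x, sq_nonneg y, sq_nonneg z]
    have hy0 : y = 0 := by nlinarith [sq_nonneg x, sq_nonneg y, sq_nonneg z]
    have hz0 : z = 0 := by nlinarith [sq_nonneg x, sq_nonneg y, sq_nonneg z]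
    subst hx0 hy0 hz0
    have hτ' : τ ≠ 0 := by simpa using hne
    have hτp : 0 < τ := lt_of_le_of_ne hτ hτ'.symm
    refine ⟨(c/4-c^2)/τ, 0, 0, 0, by positivity, le_rfl, le_rfl, le_rfl, by simp, by simp,
      by simp, ?_⟩
    rw [hT0]; field_simp
  · have hpos : 0 < x^2+y^2+z^2 := lt_of_le_of_ne (by positivity) (Ne.symm h0)
    set ψ : ℝ → ℝ := fun m => sliceT c (m*x) (m*y) (m*z) - m^3*τ with hψ
    have hψc : Continuous ψ := by unfold ψ sliceT; fun_prop
    set m₁ := √((3/4-3*c)/(x^2+y^2+z^2)) with hm₁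
    have hm₁0 : 0 ≤ m₁ := Real.sqrt_nonneg _
    have hm₁2 : m₁^2*(x^2+y^2+z^2) = 3/4-3*c := by
      rw [hm₁, Real.sq_sqrt (div_nonneg (by linarith) hpos.le)]; field_simp
    have hψ0 : ψ 0 = c/4-c^2 := by simp [hψ, hT0]
    have hψ1 : ψ m₁ ≤ 0 := by
      have : sliceT c (m₁*x) (m₁*y) (m₁*z) < 0 := by
        by_contra! h
        have := sum_lt_of_sliceT_nonneg hc0 hc1 (by positivity) (by positivity)
          (by positivity) h
        nlinarith
      have h3 : 0 ≤ m₁^3*τ := by positivity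
      simp only [hψ]; linarith
    obtain ⟨m, hm, hm'⟩ := intermediate_value_Icc' hm₁0 hψc.continuousOn
      (show (0:ℝ) ∈ Set.Icc (ψ m₁) (ψ 0) from ⟨hψ1, by rw [hψ0]; exact hkpos.le⟩)
    have hm0 : 0 < m := by
      refine lt_of_le_of_ne hm.1 fun h => ?_
      rw [← h, hψ0] at hm'
      exact hkpos.ne' hm'
    refine ⟨m^3, m*x, m*y, m*z, by positivity, by positivity, by positivity, by positivity,
      by ring, by ring, by ring, ?_⟩
    simp only [hψ] at hm'; linarith

/-! ### The circle fibres -/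

/-- The slice in the coordinates `(a, b, d, v, t)`. The quadratic inequality and the last equation of
`Xset` together fix the sign of both factors in that equation. -/
lemma mem_slice_iff {c : ℝ} (hc0 : 0 < c) (hc1 : c < 1/4) {a b d : ℝ} (ha : 0 ≤ a) (hb : 0 ≤ b)
    (hd : 0 ≤ d) {v t : ℝ} {β : Fin 6 → ℝ} (h0 : β 0 = a^2) (h1 : β 1 = b^2) (h2 : β 2 = d^2)
    (h4 : β 4 = 2*(a*b*d) - 2*v) (h5 : β 5 = t) :
    β ∈ ({β ∈ Xset | β 3 = c} : Set (Fin 6 → ℝ)) ↔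
      β 3 = c ∧ 0 ≤ v ∧ v ≤ 2*(a*b*d) ∧ v ≤ sliceT c a b d ∧ 0 ≤ sliceG c a b d v ∧
        t^2 = 4*(v*sliceG c a b d v) := by
  have hP : 0 ≤ a*b*d := by positivity
  simp only [Xset, Set.mem_ofPred_eq]
  constructor
  · rintro ⟨⟨-, -, -, -, hL, hQ⟩, h3⟩
    rw [h0, h1, h2, h3, h4] at hL
    rw [h0, h1, h2, h3, h4, h5] at hQ
    set P := a*b*d with hPdef
    have hvT : v ≤ sliceT c a b d := by unfold sliceT; nlinarith
    have hQ' : t^2 = 4*((v*(2*P-v)) * (c*(sliceT c a b d - v) - v*(2*P - v))) := by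
      unfold sliceT; rw [hPdef] at *; linear_combination hQ/4
    -- `t² = 4 U (V - U)` with `U = v (2P - v)` and `V = c (T - v) ≥ 0` excludes `U < 0`.
    have hV : 0 ≤ c*(sliceT c a b d - v) := mul_nonneg hc0.le (by linarith)
    have hU : 0 ≤ v*(2*P-v) := by
      by_contra! h
      have := mul_neg_of_neg_of_pos h
        (by linarith : 0 < c*(sliceT c a b d - v) - v*(2*P - v))
      linarith [sq_nonneg t]
    have hv0 : 0 ≤ v := by nlinarith
    have hvP : v ≤ 2*P := by
      by_contra! h
      nlinarith
    refine ⟨h3, hv0, hvP, hvT, ?_, by unfold sliceG; rw [hQ']; ring⟩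
    unfold sliceG
    rcases eq_or_lt_of_le hU with h | h
    · rw [← h, sub_zero]; exact mul_nonneg (by linarith) hV
    · refine mul_nonneg (by linarith) ?_
      by_contra! h'
      have := mul_neg_of_pos_of_neg h h'
      linarith [sq_nonneg t]
  · rintro ⟨h3, hv0, hvP, hvT, hg, ht⟩
    have hT : 0 ≤ sliceT c a b d := hv0.trans hvT
    refine ⟨⟨⟨?_, ?_⟩, ⟨?_, ?_⟩, ⟨?_, ?_⟩, ⟨?_, ?_⟩, ?_, ?_⟩, h3⟩
    · rw [h0]; positivity
    · rw [h0]; exact sq_le_of_sliceT_nonneg hc0 ha hb hd hT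
    · rw [h1]; positivity
    · rw [h1]; exact sq_le_of_sliceT_nonneg hc0 hb ha hd (by rwa [← sliceT_swap])
    · rw [h2]; positivity
    · rw [h2]; exact sq_le_of_sliceT_nonneg hc0 hd ha hb (by rwa [← sliceT_rot])
    · rw [h3]; exact hc0.le
    · rw [h3]; exact hc1.le
    · rw [h0, h1, h2, h3, h4]; unfold sliceT at hvT; nlinarith
    · rw [h0, h1, h2, h3, h4, h5]; unfold sliceG sliceT at ht; linear_combination 4*ht

/-- Over an interior point of the base, every unit direction `(e₁, e₂)` is the direction of
`(v - g, t)` for some point of the fibre, with `t = e₂ (v + g)`. -/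
lemma exists_fibre {c a b d e₁ e₂ : ℝ} (hc0 : 0 < c)
    (hP : 0 < a*b*d) (hT : 0 < sliceT c a b d) (he : e₁^2 + e₂^2 = 1) :
    ∃ v, 0 ≤ v ∧ v ≤ 2*(a*b*d) ∧ v ≤ sliceT c a b d ∧ 0 ≤ sliceG c a b d v ∧
      0 < v + sliceG c a b d v ∧ v - sliceG c a b d v = e₁ * (v + sliceG c a b d v) ∧
      (e₂*(v + sliceG c a b d v))^2 = 4*(v*sliceG c a b d v) := by
  have he1 : -1 ≤ e₁ := by nlinarith [sq_nonneg e₂]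
  have he2 : e₁ ≤ 1 := by nlinarith [sq_nonneg e₂]
  set P := a*b*d with hPdef
  set T := sliceT c a b d with hTdef
  set K : ℝ → ℝ := fun v => v*(1-e₁) - (1+e₁)*sliceG c a b d v with hK
  have hKc : Continuous K := by unfold K sliceG; fun_prop
  have hmin : 0 < min (2*P) T := lt_min (by linarith) hT
  have hG0 : sliceG c a b d 0 = 2*P*(c*T) := by unfold sliceG; ring
  have hG0' : 0 < sliceG c a b d 0 := by rw [hG0]; positivity
  have hK0 : K 0 ≤ 0 := by
    simp only [hK]; nlinarith
  -- At `v = 2P` the first factor of `g` vanishes; at `v = T ≤ 2P` the second is nonpositive.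
  have hK1 : 0 ≤ K (min (2*P) T) := by
    have hG : sliceG c a b d (min (2*P) T) ≤ 0 := by
      rcases le_total (2*P) T with h | h
      · rw [min_eq_left h]; unfold sliceG; rw [← hPdef]; simp
      · rw [min_eq_right h]; unfold sliceG; rw [← hPdef, ← hTdef]
        nlinarith [mul_nonneg hT.le (sq_nonneg (2*P-T))]
    simp only [hK]; nlinarith
  obtain ⟨v, hv, hv'⟩ := intermediate_value_Icc hmin.le hKc.continuousOn
    (show (0:ℝ) ∈ Set.Icc (K 0) (K (min (2*P) T)) from ⟨hK0, hK1⟩)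
  simp only [hK] at hv'
  have hg : 0 ≤ sliceG c a b d v := by
    rcases eq_or_lt_of_le he1 with h | h
    · have : v = 0 := by rw [← h] at hv'; linarith
      rw [this]; exact hG0'.le
    · by_contra! hneg
      nlinarith [mul_nonneg hv.1 (by linarith : 0 ≤ 1-e₁)]
  have hpos : 0 < v + sliceG c a b d v := by
    rcases eq_or_lt_of_le hv.1 with h | h
    · rw [← h]; linarith
    · linarith
  refine ⟨v, hv.1, hv.2.trans (min_le_left _ _), hv.2.trans (min_le_right _ _), hg, hpos,
    by linarith, ?_⟩
  generalize sliceG c a b d v = g at *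
  have h1 : v - g = e₁ * (v+g) := by linarith
  have : (e₂*(v+g))^2 = (v+g)^2 - (e₁*(v+g))^2 := by linear_combination (v+g)^2*he
  rw [this, ← h1]; ring

/-- On a fibre, `g` is strictly decreasing in `v`. Its second factor decreases as long as
`v + v' < c + 2P`, which holds because `v, v' ≤ T ≤ c/4 + P`. -/
lemma sliceG_lt {c a b d v v' : ℝ} (hc0 : 0 < c)
    (hvv : v < v') (hv'P : v' ≤ 2*(a*b*d)) (hv'T : v' ≤ sliceT c a b d)
    (hg : 0 ≤ sliceG c a b d v') : sliceG c a b d v' < sliceG c a b d v := by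
  have hTle : sliceT c a b d ≤ c/4 + a*b*d := by
    unfold sliceT
    have : 0 ≤ c*(a^2+b^2+d^2) := by positivity
    have : 0 ≤ a^2*b^2+a^2*d^2+b^2*d^2 := by positivity
    nlinarith [sq_nonneg c]
  unfold sliceG at *
  set T := sliceT c a b d
  set P := a*b*d
  have hf' : 0 ≤ c*(T-v') - v'*(2*P-v') := by
    rcases eq_or_lt_of_le hv'P with h | h
    · rw [← h, sub_self, mul_zero, sub_zero]; exact mul_nonneg hc0.le (by linarith)
    · exact nonneg_of_mul_nonneg_right hg (by linarith)
  have hf : c*(T-v') - v'*(2*P-v') < c*(T-v) - v*(2*P-v) := by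
    have : 0 < (v'-v)*(c+2*P-v-v') := mul_pos (by linarith) (by linarith)
    nlinarith
  have h1 : 2*P - v' < 2*P - v := by linarith
  nlinarith [mul_le_mul_of_nonneg_left hf.le (by linarith : 0 ≤ 2*P-v'),
    mul_pos (sub_pos.2 h1) (lt_of_le_of_lt hf' hf)]

lemma fibre_unique {c a b d v v' : ℝ} (hc0 : 0 < c) (hv : 0 ≤ v) (hv' : 0 ≤ v')
    (hvP : v ≤ 2*(a*b*d)) (hv'P : v' ≤ 2*(a*b*d))
    (hvT : v ≤ sliceT c a b d) (hv'T : v' ≤ sliceT c a b d)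
    (hg : 0 ≤ sliceG c a b d v) (hg' : 0 ≤ sliceG c a b d v')
    (h : v * sliceG c a b d v' = v' * sliceG c a b d v) : v = v' := by
  rcases lt_trichotomy v v' with hlt | heq | hlt
  · have := sliceG_lt hc0 hlt hv'P hv'T hg'
    nlinarith
  · exact heq
  · have := sliceG_lt hc0 hlt hvP hvT hg
    nlinarith

/-! ### The map to five-dimensional space -/

/-- A bounded quotient `e / n` times a function that vanishes with `n` is continuous, where the
junk value `e / 0 = 0` is harmless. -/
lemma continuous_mul_div {X : Type*} [TopologicalSpace X] {m e n : X → ℝ}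
    (hm : Continuous m) (he : Continuous e) (hn : Continuous n)
    (hen : ∀ x, |e x| ≤ n x) (h0 : ∀ x, n x = 0 → m x = 0) :
    Continuous fun x => m x * (e x / n x) := by
  rw [continuous_iff_continuousAt]
  intro x
  by_cases hx : n x = 0
  · have hle : ∀ y, |m y * (e y / n y)| ≤ |m y| := by
      intro y
      rw [abs_mul]
      refine mul_le_of_le_one_right (abs_nonneg _) ?_
      rw [abs_div, abs_of_nonneg ((abs_nonneg _).trans (hen y))]
      exact div_le_one_of_le₀ (hen y) ((abs_nonneg _).trans (hen y))
    unfold ContinuousAt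
    simp only [h0 x hx, zero_mul]
    refine squeeze_zero_norm (a := fun y => |m y|) hle ?_
    have := (hm.abs).tendsto x
    simpa [h0 x hx] using this
  · exact hm.continuousAt.mul (he.continuousAt.div hn.continuousAt hx)

/-- The minimum of four numbers. -/
noncomputable def minFour (α β γ τ : ℝ) : ℝ := min (min α β) (min γ τ)

lemma minFour_le (α β γ τ : ℝ) : minFour α β γ τ ≤ α ∧ minFour α β γ τ ≤ β ∧
    minFour α β γ τ ≤ γ ∧ minFour α β γ τ ≤ τ := by
  unfold minFour; simp

lemma minFour_eq (α β γ τ : ℝ) : minFour α β γ τ = α ∨ minFour α β γ τ = β ∨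
    minFour α β γ τ = γ ∨ minFour α β γ τ = τ := by
  unfold minFour; grind

/-- A point of `ℝ⁴` is recovered from its differences to the last coordinate and its minimum,
compatibly with positive scaling. -/
lemma cone_unique {α β γ τ α' β' γ' τ' k : ℝ} (hk : 0 < k)
    (hα : α' - τ' = k*(α-τ)) (hβ : β' - τ' = k*(β-τ)) (hγ : γ' - τ' = k*(γ-τ))
    (hm : minFour α' β' γ' τ' = k * minFour α β γ τ) :
    α' = k*α ∧ β' = k*β ∧ γ' = k*γ ∧ τ' = k*τ := by
  -- The four numbers `X' - k X` coincide; minimality on either side fixes their sign.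
  obtain ⟨h1, h2, h3, h4⟩ := minFour_le α β γ τ
  obtain ⟨h1', h2', h3', h4'⟩ := minFour_le α' β' γ' τ'
  have hτ : τ' = k*τ := by
    set m := minFour α β γ τ with hmdef
    rw [hm] at h1' h2' h3' h4'
    have := mul_le_mul_of_nonneg_left h1 hk.le
    have := mul_le_mul_of_nonneg_left h2 hk.le
    have := mul_le_mul_of_nonneg_left h3 hk.le
    have := mul_le_mul_of_nonneg_left h4 hk.le
    apply le_antisymm
    · rcases minFour_eq α' β' γ' τ' with h | h | h | h <;> rw [hm] at h <;> linarith
    · rcases minFour_eq α β γ τ with h | h | h | h <;> rw [← hmdef] at h <;>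
        rw [h] at h1' h2' h3' h4' <;> linarith
  refine ⟨by linarith, by linarith, by linarith, hτ⟩

/-- The slice `X ∩ {β₄ = c}`. -/
def slice (c : ℝ) : Set (Fin 6 → ℝ) := {β ∈ Xset | β 3 = c}

/-- The fibre coordinate `v = √(β₁β₂β₃) - β₅/2`. -/
noncomputable def fibV (β : Fin 6 → ℝ) : ℝ := √(β 0) * √(β 1) * √(β 2) - β 4 / 2
/-- The value of `T` at a point of the slice. -/
noncomputable def ptT (c : ℝ) (β : Fin 6 → ℝ) : ℝ := sliceT c √(β 0) √(β 1) √(β 2)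
/-- The value of `g` at a point of the slice. -/
noncomputable def ptG (c : ℝ) (β : Fin 6 → ℝ) : ℝ := sliceG c √(β 0) √(β 1) √(β 2) (fibV β)
/-- The radius `M = min(a³, b³, d³, T)` of the fibre circle in the target; it vanishes exactly over
the boundary of the base. -/
noncomputable def ptM (c : ℝ) (β : Fin 6 → ℝ) : ℝ :=
  minFour (√(β 0)^3) (√(β 1)^3) (√(β 2)^3) (ptT c β)

lemma slice_facts {c : ℝ} (hc0 : 0 < c) (hc1 : c < 1/4) {β : Fin 6 → ℝ} (h : β ∈ slice c) :
    β 3 = c ∧ 0 ≤ fibV β ∧ fibV β ≤ 2*(√(β 0) * √(β 1) * √(β 2)) ∧ fibV β ≤ ptT c β ∧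
      0 ≤ ptG c β ∧ (β 5)^2 = 4*(fibV β * ptG c β) := by
  have hX := h.1
  refine (mem_slice_iff hc0 hc1 (Real.sqrt_nonneg _) (Real.sqrt_nonneg _) (Real.sqrt_nonneg _)
    (Real.sq_sqrt hX.1.1).symm (Real.sq_sqrt hX.2.1.1).symm (Real.sq_sqrt hX.2.2.1.1).symm
    ?_ rfl).1 h
  unfold fibV; ring

lemma ptM_nonneg {c : ℝ} (hc0 : 0 < c) (hc1 : c < 1/4) {β : Fin 6 → ℝ} (h : β ∈ slice c) :
    0 ≤ ptM c β := by
  obtain ⟨-, hv, -, hvT, -, -⟩ := slice_facts hc0 hc1 h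
  have : 0 ≤ ptT c β := hv.trans hvT
  unfold ptM minFour
  exact le_min (le_min (by positivity) (by positivity)) (le_min (by positivity) this)

/-- Over the boundary of the base the fibre is a single point. -/
lemma fibre_collapse {c : ℝ} (hc0 : 0 < c) (hc1 : c < 1/4) {β : Fin 6 → ℝ} (h : β ∈ slice c)
    (hm : ptM c β = 0) : fibV β = 0 ∧ β 5 = 0 := by
  obtain ⟨-, hv, hvP, hvT, hg, ht⟩ := slice_facts hc0 hc1 h
  have hv0 : fibV β = 0 := by
    refine le_antisymm ?_ hv
    rcases minFour_eq (√(β 0)^3) (√(β 1)^3) (√(β 2)^3) (ptT c β) with h | h | h | h <;>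
      rw [show minFour _ _ _ _ = (0:ℝ) from hm] at h
    · rw [pow_eq_zero_iff (by norm_num) |>.1 h.symm] at hvP; simpa using hvP
    · rw [pow_eq_zero_iff (by norm_num) |>.1 h.symm] at hvP; simpa using hvP
    · rw [pow_eq_zero_iff (by norm_num) |>.1 h.symm] at hvP; simpa using hvP
    · rwa [← h] at hvT
  refine ⟨hv0, ?_⟩
  rw [hv0, zero_mul, mul_zero] at ht
  exact pow_eq_zero_iff (by norm_num) |>.1 ht

lemma ptM_pos_imp {c : ℝ} {β : Fin 6 → ℝ} (hm : 0 < ptM c β) :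
    0 < √(β 0) * √(β 1) * √(β 2) ∧ 0 < ptT c β := by
  obtain ⟨h1, h2, h3, h4⟩ := minFour_le (√(β 0)^3) (√(β 1)^3) (√(β 2)^3) (ptT c β)
  have hm' : 0 < minFour (√(β 0)^3) (√(β 1)^3) (√(β 2)^3) (ptT c β) := hm
  have aux : ∀ x : ℝ, 0 < √x^3 → 0 < √x := fun x hx =>
    lt_of_le_of_ne (Real.sqrt_nonneg _) fun h => by rw [← h] at hx; norm_num at hx
  exact ⟨mul_pos (mul_pos (aux _ (hm'.trans_le h1)) (aux _ (hm'.trans_le h2)))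
    (aux _ (hm'.trans_le h3)), hm'.trans_le h4⟩

/-- The vector `(v - g, t)` vanishes only over the boundary of the base. -/
lemma ptM_eq_zero_of {c : ℝ} (hc0 : 0 < c) (hc1 : c < 1/4) {β : Fin 6 → ℝ} (h : β ∈ slice c)
    (hn : fibV β + ptG c β = 0) : ptM c β = 0 := by
  obtain ⟨-, hv, hvP, hvT, hg, ht⟩ := slice_facts hc0 hc1 h
  by_contra hne
  obtain ⟨hP, hT⟩ := ptM_pos_imp (lt_of_le_of_ne (ptM_nonneg hc0 hc1 h) (Ne.symm hne))
  have hv0 : fibV β = 0 := by linarith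
  have hg0 : ptG c β = 0 := by linarith
  unfold ptG sliceG at hg0
  rw [hv0] at hg0
  have : 0 < (2*(√(β 0) * √(β 1) * √(β 2))) * (c * ptT c β) := by positivity
  unfold ptT at this
  linarith

/-- First coordinate of `(v - g, t)` rescaled to length `M`; it is `0` where `v + g = 0`. -/
noncomputable def ptE₁ (c : ℝ) (β : Fin 6 → ℝ) : ℝ :=
  ptM c β * ((fibV β - ptG c β) / (fibV β + ptG c β))
/-- Second coordinate of `(v - g, t)` rescaled to length `M`; it is `0` where `v + g = 0`. -/
noncomputable def ptE₂ (c : ℝ) (β : Fin 6 → ℝ) : ℝ :=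
  ptM c β * (β 5 / (fibV β + ptG c β))

lemma ptE_sq {c : ℝ} (hc0 : 0 < c) (hc1 : c < 1/4) {β : Fin 6 → ℝ} (h : β ∈ slice c) :
    (ptE₁ c β)^2 + (ptE₂ c β)^2 = (ptM c β)^2 := by
  obtain ⟨-, hv, hvP, hvT, hg, ht⟩ := slice_facts hc0 hc1 h
  unfold ptE₁ ptE₂
  by_cases hn : fibV β + ptG c β = 0
  · simp [ptM_eq_zero_of hc0 hc1 h hn]
  · field_simp
    rw [ht]; ring

/-- The map from the slice to `ℝ⁵ ∖ {0}` that meets every open ray from the origin exactly once. -/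
noncomputable def toFive (c : ℝ) (β : Fin 6 → ℝ) : EuclideanSpace ℝ (Fin 5) :=
  !₂[√(β 0)^3 - ptT c β, √(β 1)^3 - ptT c β, √(β 2)^3 - ptT c β, ptE₁ c β, ptE₂ c β]

/-- If the image were `0`, then `a³ = b³ = d³ = T = 0`, but `T = c/4 - c² > 0` at the origin. -/
lemma toFive_ne_zero {c : ℝ} (hc0 : 0 < c) (hc1 : c < 1/4) {β : Fin 6 → ℝ} (h : β ∈ slice c) :
    toFive c β ≠ 0 := by
  intro h0
  have H : ∀ i, toFive c β i = 0 := fun i => by rw [h0]; rfl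
  have e0 : √(β 0)^3 - ptT c β = 0 := H 0
  have e1 : √(β 1)^3 - ptT c β = 0 := H 1
  have e2 : √(β 2)^3 - ptT c β = 0 := H 2
  have e3 : ptE₁ c β = 0 := H 3
  have e4 : ptE₂ c β = 0 := H 4
  have hm := ptE_sq hc0 hc1 h
  rw [e3, e4] at hm
  have hm : minFour (√(β 0)^3) (√(β 1)^3) (√(β 2)^3) (ptT c β) = 0 := by
    have : ptM c β = 0 := pow_eq_zero_iff (by norm_num) |>.1 (by linarith : (ptM c β)^2 = 0)
    exact this
  have hT : ptT c β = 0 := by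
    rcases minFour_eq (√(β 0)^3) (√(β 1)^3) (√(β 2)^3) (ptT c β) with h | h | h | h <;> linarith
  rw [hT, sub_zero] at e0 e1 e2
  have e0 := pow_eq_zero_iff (by norm_num) |>.1 e0
  have e1 := pow_eq_zero_iff (by norm_num) |>.1 e1
  have e2 := pow_eq_zero_iff (by norm_num) |>.1 e2
  unfold ptT sliceT at hT
  rw [e0, e1, e2] at hT
  nlinarith

lemma continuous_toFive {c : ℝ} (hc0 : 0 < c) (hc1 : c < 1/4) :
    Continuous fun β : slice c => toFive c β := by
  have hV : Continuous fun β : slice c => fibV β :=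
    (by unfold fibV; fun_prop : Continuous fibV).comp continuous_subtype_val
  have hT : Continuous fun β : slice c => ptT c β :=
    (by unfold ptT sliceT; fun_prop : Continuous (ptT c)).comp continuous_subtype_val
  have hG : Continuous fun β : slice c => ptG c β :=
    (by unfold ptG sliceG sliceT fibV; fun_prop : Continuous (ptG c)).comp continuous_subtype_val
  have hM : Continuous fun β : slice c => ptM c β :=
    (by unfold ptM minFour ptT sliceT; fun_prop : Continuous (ptM c)).comp continuous_subtype_val
  have hX : ∀ i, Continuous fun β : slice c => √(β.1 i)^3 := fun i =>
    (by fun_prop : Continuous fun β : Fin 6 → ℝ => √(β i)^3).comp continuous_subtype_val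
  have h0 : ∀ β : slice c, fibV β + ptG c β = 0 → ptM c β = 0 := fun β h =>
    ptM_eq_zero_of hc0 hc1 β.2 h
  have hE₁ : Continuous fun β : slice c => ptE₁ c β := by
    refine continuous_mul_div hM (hV.sub hG) (hV.add hG) (fun β => ?_) h0
    obtain ⟨-, hv, -, -, hg, -⟩ := slice_facts hc0 hc1 β.2
    rw [abs_le]; constructor <;> linarith
  have hE₂ : Continuous fun β : slice c => ptE₂ c β := by
    refine continuous_mul_div hM (e := fun β : slice c => β.1 5)
      ((continuous_apply 5).comp continuous_subtype_val) (hV.add hG)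
      (fun β => ?_) h0
    obtain ⟨-, hv, -, -, hg, ht⟩ := slice_facts hc0 hc1 β.2
    refine abs_le_of_sq_le_sq ?_ (by linarith)
    rw [ht]
    nlinarith [sq_nonneg (fibV β - ptG c β)]
  unfold toFive
  refine (PiLp.continuous_toLp 2 _).comp (continuous_pi fun i => ?_)
  fin_cases i
  · exact (hX 0).sub hT
  · exact (hX 1).sub hT
  · exact (hX 2).sub hT
  · exact hE₁
  · exact hE₂

/-- No open ray from the origin is met twice. -/
lemma toFive_ray_injective {c : ℝ} (hc0 : 0 < c) (hc1 : c < 1/4) {β β' : Fin 6 → ℝ}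
    (h : β ∈ slice c) (h' : β' ∈ slice c) {k : ℝ} (hk : 0 < k)
    (hF : toFive c β' = k • toFive c β) : β = β' := by
  have H : ∀ i, toFive c β' i = k * toFive c β i := fun i => by rw [hF]; rfl
  have e0 : √(β' 0)^3 - ptT c β' = k * (√(β 0)^3 - ptT c β) := H 0
  have e1 : √(β' 1)^3 - ptT c β' = k * (√(β 1)^3 - ptT c β) := H 1
  have e2 : √(β' 2)^3 - ptT c β' = k * (√(β 2)^3 - ptT c β) := H 2
  have e3 : ptE₁ c β' = k * ptE₁ c β := H 3
  have e4 : ptE₂ c β' = k * ptE₂ c β := H 4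
  have hM0 := ptM_nonneg hc0 hc1 h
  have hM0' := ptM_nonneg hc0 hc1 h'
  have hM : ptM c β' = k * ptM c β := by
    refine (sq_eq_sq₀ hM0' (by positivity)).1 ?_
    rw [← ptE_sq hc0 hc1 h', e3, e4, mul_pow, mul_pow, mul_pow,
      ← ptE_sq hc0 hc1 h]; ring
  obtain ⟨f0, f1, f2, f3⟩ := cone_unique hk e0 e1 e2 hM
  obtain ⟨m, hm0, rfl⟩ := exists_cube hk.le
  have hm : 0 < m := lt_of_le_of_ne hm0 fun h => by rw [← h] at hk; norm_num at hk
  have root : ∀ x y : ℝ, √y^3 = m^3 * √x^3 → √y = m * √x := fun x y hxy =>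
    (pow_left_inj₀ (Real.sqrt_nonneg _) (by positivity) (by norm_num : 3 ≠ 0)).1
      (by rw [hxy]; ring)
  obtain ⟨h3, hv, hvP, hvT, hg, ht⟩ := slice_facts hc0 hc1 h
  obtain ⟨h3', hv', hvP', hvT', hg', ht'⟩ := slice_facts hc0 hc1 h'
  have hm1 : m = 1 := sliceT_ray_unique hc0 hc1
    (sum_lt_of_sliceT_nonneg hc0 hc1 (Real.sqrt_nonneg _) (Real.sqrt_nonneg _)
      (Real.sqrt_nonneg _) (hv.trans hvT))
    (sum_lt_of_sliceT_nonneg hc0 hc1 (Real.sqrt_nonneg _) (Real.sqrt_nonneg _)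
      (Real.sqrt_nonneg _) (hv'.trans hvT')) hm (root _ _ f0) (root _ _ f1) (root _ _ f2) f3
  subst hm1
  have r0 : √(β' 0) = √(β 0) := by simpa using root _ _ f0
  have r1 : √(β' 1) = √(β 1) := by simpa using root _ _ f1
  have r2 : √(β' 2) = √(β 2) := by simpa using root _ _ f2
  rw [one_pow, one_mul] at e3 e4 hM
  have hvt : fibV β = fibV β' ∧ β 5 = β' 5 := by
    rcases eq_or_lt_of_le hM0 with hz | hpos
    · obtain ⟨p, q⟩ := fibre_collapse hc0 hc1 h hz.symm
      obtain ⟨p', q'⟩ := fibre_collapse hc0 hc1 h' (hM.trans hz.symm)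
      exact ⟨p.trans p'.symm, q.trans q'.symm⟩
    · have hn : fibV β + ptG c β ≠ 0 := fun hh => hpos.ne' (ptM_eq_zero_of hc0 hc1 h hh)
      have hn' : fibV β' + ptG c β' ≠ 0 := fun hh =>
        (hM ▸ hpos).ne' (ptM_eq_zero_of hc0 hc1 h' hh)
      unfold ptE₁ at e3
      unfold ptE₂ at e4
      rw [hM] at e3 e4
      have e3 := mul_left_cancel₀ hpos.ne' e3
      have e4 := mul_left_cancel₀ hpos.ne' e4
      rw [div_eq_div_iff hn' hn] at e3
      have hvv : fibV β = fibV β' := by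
        unfold ptT at hvT hvT'
        unfold ptG at hg hg' e3
        rw [r0, r1, r2] at hvP' hvT' hg' e3
        exact fibre_unique hc0 hv hv' hvP hvP' hvT hvT' hg hg' (by linarith)
      have hgg : ptG c β = ptG c β' := by unfold ptG; rw [r0, r1, r2, hvv]
      rw [hvv, hgg] at e4
      exact ⟨hvv, ((div_left_inj' hn').1 e4).symm⟩
  have sq : ∀ x y : ℝ, 0 ≤ x → 0 ≤ y → √y = √x → x = y := fun x y hx hy hxy =>
    ((Real.sqrt_inj hy hx).1 hxy).symm
  obtain ⟨hvv, htt⟩ := hvt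
  funext i
  fin_cases i
  · exact sq _ _ h.1.1.1 h'.1.1.1 r0
  · exact sq _ _ h.1.2.1.1 h'.1.2.1.1 r1
  · exact sq _ _ h.1.2.2.1.1 h'.1.2.2.1.1 r2
  · exact h3.trans h3'.symm
  · unfold fibV at hvv
    rw [r0, r1, r2] at hvv
    change β 4 = β' 4
    linarith
  · exact htt

/-- Every open ray from the origin is met. The nonnegative point of `ℝ⁴` with prescribed differences
`p₀, p₁, p₂` to its last coordinate and with minimum `r = |(p₃, p₄)|` is
`(p₀ + r - μ, p₁ + r - μ, p₂ + r - μ, r - μ)`, where `μ = min(p₀, p₁, p₂, 0)`. -/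
lemma toFive_ray_surjective {c : ℝ} (hc0 : 0 < c) (hc1 : c < 1/4) {p : EuclideanSpace ℝ (Fin 5)}
    (hp : p ≠ 0) : ∃ β ∈ slice c, ∃ k : ℝ, 0 < k ∧ toFive c β = k • p := by
  set r := √((p 3)^2 + (p 4)^2) with hr
  have hr0 : 0 ≤ r := Real.sqrt_nonneg _
  have hr2 : r^2 = (p 3)^2 + (p 4)^2 := Real.sq_sqrt (by positivity)
  set μ := minFour (p 0) (p 1) (p 2) 0 with hμ
  obtain ⟨m0, m1, m2, m3⟩ := minFour_le (p 0) (p 1) (p 2) 0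
  rw [← hμ] at m0 m1 m2 m3
  have hne : p 0 + r - μ ≠ 0 ∨ p 1 + r - μ ≠ 0 ∨ p 2 + r - μ ≠ 0 ∨ r - μ ≠ 0 := by
    by_contra! hall
    obtain ⟨a0, a1, a2, a3⟩ := hall
    have hrz : r = 0 := by linarith
    have : (p 3)^2 + (p 4)^2 = 0 := by rw [← hr2, hrz]; norm_num
    refine hp (PiLp.ext fun i => ?_)
    fin_cases i
    · change p 0 = 0; linarith
    · change p 1 = 0; linarith
    · change p 2 = 0; linarith
    · change p 3 = 0; nlinarith [sq_nonneg (p 3), sq_nonneg (p 4)]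
    · change p 4 = 0; nlinarith [sq_nonneg (p 3), sq_nonneg (p 4)]
  obtain ⟨k, a, b, d, hk, ha, hb, hd, ha3, hb3, hd3, hT⟩ := exists_radial hc0 hc1
    (by linarith : 0 ≤ p 0 + r - μ) (by linarith : 0 ≤ p 1 + r - μ)
    (by linarith : 0 ≤ p 2 + r - μ) (by linarith : 0 ≤ r - μ) hne
  have hmin : minFour (a^3) (b^3) (d^3) (sliceT c a b d) = k*r := by
    rw [ha3, hb3, hd3, hT]
    unfold minFour
    rw [← mul_min_of_nonneg _ _ hk.le, ← mul_min_of_nonneg _ _ hk.le,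
      ← mul_min_of_nonneg _ _ hk.le]
    congr 1
    have : minFour (p 0) (p 1) (p 2) 0 = μ := rfl
    unfold minFour at this
    grind
  have hT0 : 0 ≤ sliceT c a b d := by rw [hT]; exact mul_nonneg hk.le (by linarith)
  obtain ⟨v, t, hv0, hvP, hvT, hg, ht, hE⟩ : ∃ v t : ℝ, 0 ≤ v ∧ v ≤ 2*(a*b*d) ∧
      v ≤ sliceT c a b d ∧ 0 ≤ sliceG c a b d v ∧ t^2 = 4*(v*sliceG c a b d v) ∧
      (k*r)*((v - sliceG c a b d v)/(v + sliceG c a b d v)) = k * p 3 ∧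
      (k*r)*(t/(v + sliceG c a b d v)) = k * p 4 := by
    rcases eq_or_lt_of_le hr0 with hz | hpos
    · have : (p 3)^2 + (p 4)^2 = 0 := by rw [← hr2, ← hz]; norm_num
      have q3 : p 3 = 0 := by nlinarith [sq_nonneg (p 3), sq_nonneg (p 4)]
      have q4 : p 4 = 0 := by nlinarith [sq_nonneg (p 3), sq_nonneg (p 4)]
      refine ⟨0, 0, le_rfl, by positivity, hT0, ?_, by simp, ?_, ?_⟩
      · have : sliceG c a b d 0 = 2*(a*b*d)*(c*sliceT c a b d) := by unfold sliceG; ring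
        rw [this]; positivity
      · simp [← hz, q3]
      · simp [← hz, q4]
    · have hkr : 0 < k*r := by positivity
      obtain ⟨n0, n1, n2, n3⟩ := minFour_le (a^3) (b^3) (d^3) (sliceT c a b d)
      rw [hmin] at n0 n1 n2 n3
      have aux : ∀ x : ℝ, 0 ≤ x → k*r ≤ x^3 → 0 < x := fun x hx hle =>
        lt_of_le_of_ne hx fun h => by rw [← h] at hle; norm_num at hle; linarith
      have hP : 0 < a*b*d := mul_pos (mul_pos (aux a ha n0) (aux b hb n1)) (aux d hd n2)
      obtain ⟨v, hv0, hvP, hvT, hg, hpos', he₁, he₂⟩ := exists_fibre (e₁ := p 3 / r)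
        (e₂ := p 4 / r) hc0 hP (hkr.trans_le n3) (by field_simp; exact hr2.symm)
      refine ⟨v, p 4 / r * (v + sliceG c a b d v), hv0, hvP, hvT, hg, he₂, ?_, ?_⟩
      · rw [he₁]; field_simp
      · field_simp
  set β : Fin 6 → ℝ := ![a^2, b^2, d^2, c, 2*(a*b*d) - 2*v, t] with hβ
  have s0 : √(β 0) = a := Real.sqrt_sq ha
  have s1 : √(β 1) = b := Real.sqrt_sq hb
  have s2 : √(β 2) = d := Real.sqrt_sq hd
  have hmem : β ∈ slice c := (mem_slice_iff hc0 hc1 ha hb hd rfl rfl rfl rfl rfl).2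
    ⟨rfl, hv0, hvP, hvT, hg, ht⟩
  have hV : fibV β = v := by
    unfold fibV; rw [s0, s1, s2]
    change a*b*d - (2*(a*b*d) - 2*v)/2 = v
    ring
  have hTT : ptT c β = sliceT c a b d := by unfold ptT; rw [s0, s1, s2]
  have hGG : ptG c β = sliceG c a b d v := by unfold ptG; rw [s0, s1, s2, hV]
  have hMM : ptM c β = k*r := by unfold ptM; rw [s0, s1, s2, hTT, hmin]
  refine ⟨β, hmem, k, hk, PiLp.ext fun i => ?_⟩
  fin_cases i
  · change √(β 0)^3 - ptT c β = k * p 0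
    rw [s0, hTT, ha3, hT]; ring
  · change √(β 1)^3 - ptT c β = k * p 1
    rw [s1, hTT, hb3, hT]; ring
  · change √(β 2)^3 - ptT c β = k * p 2
    rw [s2, hTT, hd3, hT]; ring
  · change ptM c β * ((fibV β - ptG c β) / (fibV β + ptG c β)) = k * p 3
    rw [hMM, hV, hGG]; exact hE.1
  · change ptM c β * (β 5 / (fibV β + ptG c β)) = k * p 4
    rw [hMM, hV, hGG]; exact hE.2

/-! ### Compactness and the homeomorphism -/

lemma isCompact_slice {c : ℝ} (hc0 : 0 < c) (hc1 : c < 1/4) : IsCompact (slice c) := by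
  have hclosed : IsClosed (slice c) := by
    simp only [slice, Xset, Set.ofPred_and]
    repeat' apply IsClosed.inter
    all_goals first
      | exact isClosed_le (by fun_prop) (by fun_prop)
      | exact isClosed_eq (by fun_prop) (by fun_prop)
  refine (isCompact_Icc (a := fun _ : Fin 6 => (-1:ℝ)) (b := fun _ => (1:ℝ))).of_isClosed_subset
    hclosed fun β h => ?_
  obtain ⟨h3, hv, hvP, hvT, hg, ht⟩ := slice_facts hc0 hc1 h
  have half : ∀ x : ℝ, x ≤ 1/4 → √x ≤ 1/2 := fun x hx =>
    Real.sqrt_le_iff.2 ⟨by norm_num, by linarith⟩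
  have b0 := half _ h.1.1.2
  have b1 := half _ h.1.2.1.2
  have b2 := half _ h.1.2.2.1.2
  have hP0 : 0 ≤ √(β 0) * √(β 1) * √(β 2) := by positivity
  have hP : √(β 0) * √(β 1) * √(β 2) ≤ 1/2*(1/2)*(1/2) := by gcongr
  have h4 : β 4 = 2*(√(β 0) * √(β 1) * √(β 2)) - 2*fibV β := by unfold fibV; ring
  have hT1 : ptT c β ≤ 1 := by
    unfold ptT sliceT
    have : 0 ≤ c*(√(β 0)^2 + √(β 1)^2 + √(β 2)^2) := by positivity
    have : 0 ≤ √(β 0)^2*√(β 1)^2 + √(β 0)^2*√(β 2)^2 + √(β 1)^2*√(β 2)^2 := by positivity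
    nlinarith
  have hG1 : ptG c β ≤ 1 := by
    unfold ptG sliceG
    change (2*(√(β 0) * √(β 1) * √(β 2)) - fibV β) * (c*(ptT c β - fibV β)
      - fibV β*(2*(√(β 0) * √(β 1) * √(β 2)) - fibV β)) ≤ 1
    have i1 : c*(ptT c β - fibV β) ≤ 1 := by nlinarith
    have i2 := mul_nonneg hv (sub_nonneg.2 hvP)
    nlinarith
  have h5 : |β 5| ≤ 1 := by
    refine abs_le_of_sq_le_sq ?_ (by norm_num)
    rw [ht]; nlinarith
  rw [abs_le] at h5
  obtain ⟨⟨⟨p0, q0⟩, ⟨p1, q1⟩, ⟨p2, q2⟩, ⟨p3, q3⟩, -⟩, -⟩ := h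
  constructor <;> intro i <;> fin_cases i <;> simp <;> linarith

/-- for every `0 < c < 1/4`, the slice `X ∩ {β4 = c}` (with the
subspace topology from `ℝ^6`) is homeomorphic to the 4-sphere `S⁴ ⊂ ℝ⁵`. -/
theorem stmt18 (c : ℝ) (hc0 : 0 < c) (hc1 : c < 1/4) :
    Nonempty (({β ∈ Xset | β 3 = c} : Set (Fin 6 → ℝ)) ≃ₜ
      (Metric.sphere (0 : EuclideanSpace ℝ (Fin 5)) 1)) := by
  change Nonempty (slice c ≃ₜ _)
  have hpos : ∀ β : slice c, 0 < ‖toFive c β‖ := fun β =>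
    norm_pos_iff.2 (toFive_ne_zero hc0 hc1 β.2)
  let f : slice c → Metric.sphere (0 : EuclideanSpace ℝ (Fin 5)) 1 := fun β =>
    ⟨‖toFive c β‖⁻¹ • toFive c β, by
      rw [mem_sphere_zero_iff_norm, norm_smul, norm_inv, norm_norm,
        inv_mul_cancel₀ (hpos β).ne']⟩
  have hf : Continuous f := by
    refine Continuous.subtype_mk ?_ _
    have := continuous_toFive hc0 hc1
    exact (this.norm.inv₀ fun β => (hpos β).ne').smul this
  have hbij : Function.Bijective f := by
    constructor
    · intro β β' h
      have h : ‖toFive c β‖⁻¹ • toFive c β = ‖toFive c β'‖⁻¹ • toFive c β' := congrArg Subtype.val h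
      refine Subtype.ext (toFive_ray_injective hc0 hc1 β.2 β'.2
        (k := ‖toFive c β'‖ * ‖toFive c β‖⁻¹) (mul_pos (hpos β') (inv_pos.2 (hpos β))) ?_)
      rw [mul_smul, h, smul_inv_smul₀ (hpos β').ne']
    · rintro ⟨p, hp⟩
      have hp1 : ‖p‖ = 1 := mem_sphere_zero_iff_norm.1 hp
      obtain ⟨β, hβ, k, hk, h⟩ := toFive_ray_surjective (p := p) hc0 hc1
        (norm_pos_iff.1 (by rw [hp1]; norm_num))
      refine ⟨⟨β, hβ⟩, Subtype.ext ?_⟩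
      change ‖toFive c β‖⁻¹ • toFive c β = p
      rw [h, norm_smul, hp1, mul_one, Real.norm_of_nonneg hk.le, inv_smul_smul₀ hk.ne']
  have : CompactSpace (slice c) := isCompact_iff_compactSpace.1 (isCompact_slice hc0 hc1)
  exact ⟨Continuous.homeoOfEquivCompactToT2 (f := Equiv.ofBijective f hbij) hf⟩
end
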